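/- arXiv:1707.00970 — 5 statements merged into one kernel-verified Lean document; each statement's English description precedes it below -/
import Mathlib

section
/- Let (a, B_a) be a NIS-Lie superalgebra over a field K of characteristic 2 with B_a even. Let D be an even derivation of a satisfying B_a(D(u),v) + B_a(u,D(v)) = 0 for all u,v ∈ a and B_a(D(u),u) = 0 for all u ∈ a_0, and let α be a quadratic form on a_1 whose polar form satisfies B_a(u,D(v)) = B_α(u,v) for all u,v ∈ a_1. Then on g := Kx ⊕ a ⊕ Kx* with x and x* even, the squaring s_g(u) := s_a(u) + α(u)x for u ∈ g_1 = a_1, together with the bracket [x,g]_g := 0, [u,v]_g := [u,v]_a + B_a(D(u),v)x for u,v ∈ a, and [x*,u]_g := D(u), defines a Lie superalgebra structure on g; moreover the bilinear form B_g determined by B_g|_{a×a} = B_a, B_g(a,x) = B_g(a,x*) = 0, B_g(x,x*) = 1, B_g(x,x) = 0 and B_g(x*,x*) arbitrary is even, non-degenerate, symmetric and invariant, so that (g,B_g) is a NIS-Lie superalgebra (called the D_ev-extension of (a,B_a) by means of D and α). -/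
/-!
Common definitions: Lie superalgebras in characteristic 2 (encoded by their even
part `g0`, odd part `g1`, bracket components and squaring), NIS forms (even and odd),
homogeneous derivations, isometries, ideals, irreducibility, and the structure
formulas of the various double extensions.
-/

namespace Char2DoubleExt

section Defs

variable (K : Type) [Field K]
variable (g0 g1 h0 h1 : Type)
variable [AddCommGroup g0] [Module K g0] [AddCommGroup g1] [Module K g1]
variable [AddCommGroup h0] [Module K h0] [AddCommGroup h1] [Module K h1]

/-- A Lie superalgebra over a field of characteristic 2: `g0` is the even part,
`g1` the odd part, `br0` the bracket on `g0`, `br1` the action of `g0` on `g1`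
(the mixed bracket, extended symmetrically), `br11` the bracket of two odd
elements, and `sq` the squaring, whose polarization is `br11`. -/
structure SuperAlg : Type where
  br0 : g0 →ₗ[K] g0 →ₗ[K] g0
  br1 : g0 →ₗ[K] g1 →ₗ[K] g1
  br11 : g1 →ₗ[K] g1 →ₗ[K] g0
  sq : g1 → g0
  sq_smul : ∀ (c : K) (f : g1), sq (c • f) = (c * c) • sq f
  sq_add : ∀ f g : g1, sq (f + g) = sq f + sq g + br11 f g
  br0_self : ∀ x : g0, br0 x x = 0
  br11_comm : ∀ f g : g1, br11 f g = br11 g f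
  jacobi0 : ∀ x y z : g0, br0 x (br0 y z) + br0 y (br0 z x) + br0 z (br0 x y) = 0
  act_br : ∀ (x y : g0) (f : g1), br1 (br0 x y) f = br1 x (br1 y f) + br1 y (br1 x f)
  jacobi_mix : ∀ (x : g0) (f g : g1),
    br0 x (br11 f g) + br11 f (br1 x g) + br11 g (br1 x f) = 0
  sq_br0 : ∀ (f : g1) (x : g0), br0 (sq f) x = br11 f (br1 x f)
  sq_br1 : ∀ f g : g1, br1 (sq f) g = br1 (br11 f g) f

/-- A non-degenerate invariant supersymmetric *even* bilinear form on a Lie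
superalgebra in characteristic 2: it pairs `g0` with `g0` (component `B0`) and
`g1` with `g1` (component `B1`); mixed pairings vanish by evenness. -/
structure EvenNIS (S : SuperAlg K g0 g1) : Type where
  B0 : g0 →ₗ[K] g0 →ₗ[K] K
  B1 : g1 →ₗ[K] g1 →ₗ[K] K
  symm0 : ∀ x y, B0 x y = B0 y x
  symm1 : ∀ f g, B1 f g = B1 g f
  alt1 : ∀ f, B1 f f = 0
  nondeg0 : ∀ x, (∀ y, B0 x y = 0) → x = 0
  nondeg1 : ∀ f, (∀ g, B1 f g = 0) → f = 0
  inv0 : ∀ x y z, B0 (S.br0 x y) z = B0 x (S.br0 y z)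
  inv1 : ∀ (x : g0) (f g : g1), B1 (S.br1 x f) g = B0 x (S.br11 f g)
  inv2 : ∀ (f g : g1) (x : g0), B0 (S.br11 f g) x = B1 f (S.br1 x g)

/-- A non-degenerate invariant supersymmetric *odd* bilinear form: it pairs `g0`
with `g1` (component `Bo`); like-parity pairings vanish by oddness, and
`B(f,f) = 0` for odd `f` is automatic. -/
structure OddNIS (S : SuperAlg K g0 g1) : Type where
  Bo : g0 →ₗ[K] g1 →ₗ[K] K
  nondeg0 : ∀ x, (∀ f, Bo x f = 0) → x = 0
  nondeg1 : ∀ f, (∀ x, Bo x f = 0) → f = 0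
  inv0 : ∀ (x y : g0) (f : g1), Bo (S.br0 x y) f = Bo x (S.br1 y f)
  inv1 : ∀ (x y : g0) (f : g1), Bo y (S.br1 x f) = Bo x (S.br1 y f)
  inv2 : ∀ f g h : g1, Bo (S.br11 f g) h = Bo (S.br11 g h) f

/-- An even derivation of a Lie superalgebra in characteristic 2. -/
structure EvenDer (S : SuperAlg K g0 g1) : Type where
  D0 : g0 →ₗ[K] g0
  D1 : g1 →ₗ[K] g1
  der0 : ∀ x y, D0 (S.br0 x y) = S.br0 (D0 x) y + S.br0 x (D0 y)
  der1 : ∀ x f, D1 (S.br1 x f) = S.br1 (D0 x) f + S.br1 x (D1 f)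
  der_sq : ∀ f, D0 (S.sq f) = S.br11 (D1 f) f

/-- An odd derivation of a Lie superalgebra in characteristic 2. -/
structure OddDer (S : SuperAlg K g0 g1) : Type where
  D0 : g0 →ₗ[K] g1
  D1 : g1 →ₗ[K] g0
  der0 : ∀ x y, D0 (S.br0 x y) = S.br1 x (D0 y) + S.br1 y (D0 x)
  der1 : ∀ x f, D1 (S.br1 x f) = S.br11 (D0 x) f + S.br0 x (D1 f)
  der_sq : ∀ f, D0 (S.sq f) = S.br1 (D1 f) f

/-- An isometry between Lie superalgebras endowed with even NIS forms: an even
linear bijection preserving brackets, squarings and the bilinear forms. -/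
structure EvenIsometry (S : SuperAlg K g0 g1) (N : EvenNIS K g0 g1 S)
    (S' : SuperAlg K h0 h1) (N' : EvenNIS K h0 h1 S') : Type where
  e0 : g0 ≃ₗ[K] h0
  e1 : g1 ≃ₗ[K] h1
  map_br0 : ∀ x y, e0 (S.br0 x y) = S'.br0 (e0 x) (e0 y)
  map_br1 : ∀ x f, e1 (S.br1 x f) = S'.br1 (e0 x) (e1 f)
  map_br11 : ∀ f g, e0 (S.br11 f g) = S'.br11 (e1 f) (e1 g)
  map_sq : ∀ f, e0 (S.sq f) = S'.sq (e1 f)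
  map_B0 : ∀ x y, N'.B0 (e0 x) (e0 y) = N.B0 x y
  map_B1 : ∀ f g, N'.B1 (e1 f) (e1 g) = N.B1 f g

/-- An isometry between Lie superalgebras endowed with odd NIS forms. -/
structure OddIsometry (S : SuperAlg K g0 g1) (N : OddNIS K g0 g1 S)
    (S' : SuperAlg K h0 h1) (N' : OddNIS K h0 h1 S') : Type where
  e0 : g0 ≃ₗ[K] h0
  e1 : g1 ≃ₗ[K] h1
  map_br0 : ∀ x y, e0 (S.br0 x y) = S'.br0 (e0 x) (e0 y)
  map_br1 : ∀ x f, e1 (S.br1 x f) = S'.br1 (e0 x) (e1 f)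
  map_br11 : ∀ f g, e0 (S.br11 f g) = S'.br11 (e1 f) (e1 g)
  map_sq : ∀ f, e0 (S.sq f) = S'.sq (e1 f)
  map_Bo : ∀ x f, N'.Bo (e0 x) (e1 f) = N.Bo x f

/-- A (graded) ideal of a Lie superalgebra in characteristic 2, given by its
even part `I0` and odd part `I1`. -/
def IsIdealPair (S : SuperAlg K g0 g1) (I0 : Submodule K g0) (I1 : Submodule K g1) : Prop :=
  (∀ x ∈ I0, ∀ y, S.br0 x y ∈ I0) ∧ (∀ x ∈ I0, ∀ f, S.br1 x f ∈ I1) ∧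
  (∀ f ∈ I1, ∀ x : g0, S.br1 x f ∈ I1) ∧ (∀ f ∈ I1, ∀ g, S.br11 f g ∈ I0) ∧
  (∀ f ∈ I1, S.sq f ∈ I0)

/-- Irreducibility of a NIS-Lie superalgebra with an even form: it is not the
direct sum of two nonzero mutually orthogonal ideals. -/
def EvenIrreducible (S : SuperAlg K g0 g1) (N : EvenNIS K g0 g1 S) : Prop :=
  ¬ ∃ (I0 J0 : Submodule K g0) (I1 J1 : Submodule K g1),
      IsIdealPair K g0 g1 S I0 I1 ∧ IsIdealPair K g0 g1 S J0 J1 ∧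
      (I0 ≠ ⊥ ∨ I1 ≠ ⊥) ∧ (J0 ≠ ⊥ ∨ J1 ≠ ⊥) ∧
      I0 ⊓ J0 = ⊥ ∧ I0 ⊔ J0 = ⊤ ∧ I1 ⊓ J1 = ⊥ ∧ I1 ⊔ J1 = ⊤ ∧
      (∀ x ∈ I0, ∀ y ∈ J0, N.B0 x y = 0) ∧ (∀ f ∈ I1, ∀ g ∈ J1, N.B1 f g = 0)

/-- Irreducibility of a NIS-Lie superalgebra with an odd form. -/
def OddIrreducible (S : SuperAlg K g0 g1) (N : OddNIS K g0 g1 S) : Prop :=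
  ¬ ∃ (I0 J0 : Submodule K g0) (I1 J1 : Submodule K g1),
      IsIdealPair K g0 g1 S I0 I1 ∧ IsIdealPair K g0 g1 S J0 J1 ∧
      (I0 ≠ ⊥ ∨ I1 ≠ ⊥) ∧ (J0 ≠ ⊥ ∨ J1 ≠ ⊥) ∧
      I0 ⊓ J0 = ⊥ ∧ I0 ⊔ J0 = ⊤ ∧ I1 ⊓ J1 = ⊥ ∧ I1 ⊔ J1 = ⊤ ∧
      (∀ x ∈ I0, ∀ g ∈ J1, N.Bo x g = 0) ∧ (∀ y ∈ J0, ∀ f ∈ I1, N.Bo y f = 0)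

/-- An ideal of a Lie superalgebra given as a pair of subsets (closed under the
vector space operations, brackets with arbitrary elements, and the squaring). -/
def IsIdealSet (S : SuperAlg K g0 g1) (I0 : Set g0) (I1 : Set g1) : Prop :=
  ((0 : g0) ∈ I0) ∧ (∀ x y, x ∈ I0 → y ∈ I0 → x + y ∈ I0) ∧
  (∀ (c : K) x, x ∈ I0 → c • x ∈ I0) ∧
  ((0 : g1) ∈ I1) ∧ (∀ f g, f ∈ I1 → g ∈ I1 → f + g ∈ I1) ∧
  (∀ (c : K) f, f ∈ I1 → c • f ∈ I1) ∧
  (∀ x ∈ I0, ∀ y, S.br0 x y ∈ I0) ∧ (∀ x ∈ I0, ∀ f, S.br1 x f ∈ I1) ∧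
  (∀ f ∈ I1, ∀ x : g0, S.br1 x f ∈ I1) ∧ (∀ f ∈ I1, ∀ g, S.br11 f g ∈ I0) ∧
  (∀ f ∈ I1, S.sq f ∈ I0)

/-- The even part of the center of a Lie superalgebra. -/
def zEven (S : SuperAlg K g0 g1) : Submodule K g0 :=
  (⨅ y : g0, LinearMap.ker (S.br0.flip y)) ⊓ (⨅ f : g1, LinearMap.ker (S.br1.flip f))

/-- The odd part of the center of a Lie superalgebra. -/
def zOdd (S : SuperAlg K g0 g1) : Submodule K g1 :=
  (⨅ x : g0, LinearMap.ker (S.br1 x)) ⊓ (⨅ g : g1, LinearMap.ker (S.br11.flip g))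

/-- The compatibility conditions between an even NIS `N`, an even derivation `D`
and a quadratic form `al` on the odd part, entering the `D_ev`-extension (even
form case): `B(Du,v)+B(u,Dv)=0`, `B(Du,u)=0` for even `u`, `al` is quadratic and
its polar form is `B(·,D·)`. -/
def DevDataEven (S : SuperAlg K g0 g1) (N : EvenNIS K g0 g1 S)
    (D : EvenDer K g0 g1 S) (al : g1 → K) : Prop :=
  (∀ x y : g0, N.B0 (D.D0 x) y + N.B0 x (D.D0 y) = 0) ∧
  (∀ f g : g1, N.B1 (D.D1 f) g + N.B1 f (D.D1 g) = 0) ∧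
  (∀ x : g0, N.B0 (D.D0 x) x = 0) ∧
  (∀ (c : K) (f : g1), al (c • f) = c * c * al f) ∧
  (∀ f g : g1, N.B1 f (D.D1 g) = al (f + g) - al f - al g)

/-- The structure constants of the `D_ev`-extension `g = Kx ⊕ a ⊕ Kx*` (even
form, even `x`, `x*`); an element of the even part is written `(r, u, s)` for
`r x + u + s x*`, and the constant `c` is the (arbitrary) value `B_g(x*,x*)`. -/
def DevExtEvenFormulas (S : SuperAlg K g0 g1) (N : EvenNIS K g0 g1 S)
    (D : EvenDer K g0 g1 S) (al : g1 → K) (c : K)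
    (T : SuperAlg K (K × g0 × K) g1) (M : EvenNIS K (K × g0 × K) g1 T) : Prop :=
  (∀ (r s r' s' : K) (u u' : g0),
      T.br0 (r, u, s) (r', u', s')
        = (N.B0 (D.D0 u) u', S.br0 u u' + s • D.D0 u' + s' • D.D0 u, 0)) ∧
  (∀ (r s : K) (u : g0) (f : g1), T.br1 (r, u, s) f = S.br1 u f + s • D.D1 f) ∧
  (∀ f : g1, T.sq f = (al f, S.sq f, 0)) ∧
  (∀ (r s r' s' : K) (u u' : g0),
      M.B0 (r, u, s) (r', u', s') = N.B0 u u' + r * s' + r' * s + c * (s * s')) ∧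
  (∀ f g : g1, M.B1 f g = N.B1 f g)

/-- The compatibility conditions between an even NIS `N`, an odd derivation `D`
and an even element `w = a₀`, entering the `D_od`-extension (even form case):
`B(Du,v) = B(u,Dv)`, `D² = ad_w`, `D(w) = 0`. -/
def DodDataEven (S : SuperAlg K g0 g1) (N : EvenNIS K g0 g1 S)
    (D : OddDer K g0 g1 S) (w : g0) : Prop :=
  (∀ (x : g0) (f : g1), N.B1 (D.D0 x) f = N.B0 x (D.D1 f)) ∧
  (∀ x : g0, D.D1 (D.D0 x) = S.br0 w x) ∧
  (∀ f : g1, D.D0 (D.D1 f) = S.br1 w f) ∧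
  D.D0 w = 0

/-- The structure constants of the `D_od`-extension `g = Kx ⊕ a ⊕ Kx*` (even
form, odd `x`, `x*`); an element of the odd part is written `(r, u, t)` for
`r x + u + t x*`. -/
def DodExtEvenFormulas (S : SuperAlg K g0 g1) (N : EvenNIS K g0 g1 S)
    (D : OddDer K g0 g1 S) (w : g0)
    (T : SuperAlg K g0 (K × g1 × K)) (M : EvenNIS K g0 (K × g1 × K) T) : Prop :=
  (∀ x y : g0, T.br0 x y = S.br0 x y) ∧
  (∀ (x : g0) (r t : K) (u : g1),
      T.br1 x (r, u, t) = (N.B1 (D.D0 x) u, S.br1 x u + t • D.D0 x, 0)) ∧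
  (∀ (r t : K) (u : g1), T.sq (r, u, t) = S.sq u + (t * t) • w + t • D.D1 u) ∧
  (∀ x y : g0, M.B0 x y = N.B0 x y) ∧
  (∀ (r t r' t' : K) (u u' : g1),
      M.B1 (r, u, t) (r', u', t') = N.B1 u u' + r * t' + r' * t)

/-- The compatibility conditions between an odd NIS `No`, an odd derivation `D`,
an even element `w = a₀` and a quadratic form `al`, entering the
`D_od`-extension (odd form case). -/
def DodDataOdd (S : SuperAlg K g0 g1) (No : OddNIS K g0 g1 S)
    (D : OddDer K g0 g1 S) (w : g0) (al : g1 → K) : Prop :=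
  (∀ x y : g0, No.Bo y (D.D0 x) + No.Bo x (D.D0 y) = 0) ∧
  (∀ f g : g1, No.Bo (D.D1 f) g + No.Bo (D.D1 g) f = 0) ∧
  (∀ x : g0, No.Bo x (D.D0 x) = 0) ∧
  (∀ x : g0, D.D1 (D.D0 x) = S.br0 w x) ∧
  (∀ f : g1, D.D0 (D.D1 f) = S.br1 w f) ∧
  D.D0 w = 0 ∧
  (∀ (c : K) (f : g1), al (c • f) = c * c * al f) ∧
  (∀ f g : g1, al (f + g) - al f - al g = No.Bo (D.D1 f) g)

/-- The structure constants of the `D_od`-extension `g = Kx ⊕ a ⊕ Ke` (odd form,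
even `x`, odd `e`); an even element is written `(r, u)` for `r x + u`, an odd
element `(v, μ)` for `v + μ e`. -/
def DodExtOddFormulas (S : SuperAlg K g0 g1) (No : OddNIS K g0 g1 S)
    (D : OddDer K g0 g1 S) (w : g0) (al : g1 → K) (m : K)
    (T : SuperAlg K (K × g0) (g1 × K)) (M : OddNIS K (K × g0) (g1 × K) T) : Prop :=
  (∀ (r r' : K) (x y : g0), T.br0 (r, x) (r', y) = (No.Bo y (D.D0 x), S.br0 x y)) ∧
  (∀ (r μ : K) (x : g0) (v : g1), T.br1 (r, x) (v, μ) = (S.br1 x v + μ • D.D0 x, 0)) ∧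
  (∀ (μ : K) (v : g1),
      T.sq (v, μ) = (μ * μ * m + al v, S.sq v + (μ * μ) • w + μ • D.D1 v)) ∧
  (∀ (r μ : K) (x : g0) (v : g1), M.Bo (r, x) (v, μ) = No.Bo x v + r * μ)

/-- The compatibility condition between an odd NIS `No` and an even derivation
`D`, entering the `D_ev`-extension (odd form case): `B(Du,v)+B(u,Dv)=0`. -/
def DevDataOdd (S : SuperAlg K g0 g1) (No : OddNIS K g0 g1 S)
    (D : EvenDer K g0 g1 S) : Prop :=
  ∀ (x : g0) (v : g1), No.Bo (D.D0 x) v + No.Bo x (D.D1 v) = 0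

/-- The structure constants of the `D_ev`-extension `g = Kx ⊕ a ⊕ Ke` (odd form,
odd `x`, even `e`); an even element is written `(u, ν)` for `u + ν e`, an odd
element `(μ, v)` for `μ x + v`. -/
def DevExtOddFormulas (S : SuperAlg K g0 g1) (No : OddNIS K g0 g1 S)
    (D : EvenDer K g0 g1 S)
    (T : SuperAlg K (g0 × K) (K × g1)) (M : OddNIS K (g0 × K) (K × g1) T) : Prop :=
  (∀ (ν ν' : K) (x y : g0),
      T.br0 (x, ν) (y, ν') = (S.br0 x y + ν • D.D0 y + ν' • D.D0 x, 0)) ∧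
  (∀ (ν μ : K) (x : g0) (v : g1),
      T.br1 (x, ν) (μ, v) = (No.Bo (D.D0 x) v, S.br1 x v + ν • D.D1 v)) ∧
  (∀ (μ : K) (v : g1), T.sq (μ, v) = (S.sq v, 0)) ∧
  (∀ (ν μ : K) (x : g0) (v : g1), M.Bo (x, ν) (μ, v) = No.Bo x v + ν * μ)

end Defs

end Char2DoubleExt

namespace Char2DoubleExt

section DevExtension

variable {K : Type} [Field K] {a0 a1 : Type}
variable [AddCommGroup a0] [Module K a0] [AddCommGroup a1] [Module K a1]
variable {S : SuperAlg K a0 a1}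

/-- The even bracket of a Lie superalgebra in characteristic 2 is symmetric. -/
theorem SuperAlg.br0_comm [CharP K 2] (S : SuperAlg K a0 a1) (x y : a0) :
    S.br0 x y = S.br0 y x := by
  have h := S.br0_self (x + y)
  simp only [map_add, LinearMap.add_apply, S.br0_self] at h
  linear_combination (norm := module) h - (CharTwo.two_eq_zero : (2 : K) = 0) • S.br0 y x

/-- An even derivation satisfies the Leibniz rule on brackets of odd elements. -/
theorem EvenDer.map_br11 (D : EvenDer K a0 a1 S) (f g : a1) :
    D.D0 (S.br11 f g) = S.br11 (D.D1 f) g + S.br11 f (D.D1 g) := by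
  have h := D.der_sq (f + g)
  simp only [S.sq_add, map_add, LinearMap.add_apply, D.der_sq] at h
  rw [S.br11_comm f (D.D1 g)]
  linear_combination (norm := module) h

/-- The bracket on the even part `Kx ⊕ a₀ ⊕ Kx*` of the `D_ev`-extension. -/
def devBr0 (N : EvenNIS K a0 a1 S) (D : EvenDer K a0 a1 S) :
    (K × a0 × K) →ₗ[K] (K × a0 × K) →ₗ[K] (K × a0 × K) :=
  LinearMap.mk₂ K
    (fun p q => (N.B0 (D.D0 p.2.1) q.2.1,
      S.br0 p.2.1 q.2.1 + p.2.2 • D.D0 q.2.1 + q.2.2 • D.D0 p.2.1, 0))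
    (fun p p' q => by
      ext <;> simp only [Prod.fst_add, Prod.snd_add, map_add, LinearMap.add_apply, add_zero]
      module)
    (fun t p q => by
      ext <;> simp only [Prod.smul_fst, Prod.smul_snd, map_smul, LinearMap.smul_apply, smul_zero]
      module)
    (fun p q q' => by
      ext <;> simp only [Prod.fst_add, Prod.snd_add, map_add, add_zero]
      module)
    (fun t p q => by
      ext <;> simp only [Prod.smul_fst, Prod.smul_snd, map_smul, smul_zero]
      module)

/-- The action of `Kx ⊕ a₀ ⊕ Kx*` on the odd part of the `D_ev`-extension. -/
def devBr1 (D : EvenDer K a0 a1 S) : (K × a0 × K) →ₗ[K] a1 →ₗ[K] a1 :=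
  LinearMap.mk₂ K (fun p f => S.br1 p.2.1 f + p.2.2 • D.D1 f)
    (fun p p' f => by
      simp only [Prod.fst_add, Prod.snd_add, map_add, LinearMap.add_apply]
      module)
    (fun t p f => by
      simp only [Prod.smul_fst, Prod.smul_snd, map_smul, LinearMap.smul_apply]
      module)
    (fun p f f' => by
      simp only [map_add]
      module)
    (fun t p f => by
      simp only [map_smul]
      module)

/-- The bracket of odd elements in the `D_ev`-extension. -/
def devBr11 (N : EvenNIS K a0 a1 S) (D : EvenDer K a0 a1 S) :
    a1 →ₗ[K] a1 →ₗ[K] (K × a0 × K) :=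
  LinearMap.mk₂ K (fun f g => (N.B1 (D.D1 f) g, S.br11 f g, 0))
    (fun f f' g => by ext <;> simp)
    (fun t f g => by ext <;> simp)
    (fun f g g' => by ext <;> simp)
    (fun t f g => by ext <;> simp)

/-- The bilinear form on the even part of the `D_ev`-extension taking the value `c` at
`(x*, x*)`. -/
def devB0 (N : EvenNIS K a0 a1 S) (c : K) : (K × a0 × K) →ₗ[K] (K × a0 × K) →ₗ[K] K :=
  LinearMap.mk₂ K
    (fun p q => N.B0 p.2.1 q.2.1 + p.1 * q.2.2 + q.1 * p.2.2 + c * (p.2.2 * q.2.2))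
    (fun p p' q => by
      simp only [Prod.fst_add, Prod.snd_add, map_add, LinearMap.add_apply]
      ring)
    (fun t p q => by
      simp only [Prod.smul_fst, Prod.smul_snd, map_smul, LinearMap.smul_apply, smul_eq_mul]
      ring)
    (fun p q q' => by
      simp only [Prod.fst_add, Prod.snd_add, map_add]
      ring)
    (fun t p q => by
      simp only [Prod.smul_fst, Prod.smul_snd, map_smul, smul_eq_mul]
      ring)

theorem devBr0_apply (N : EvenNIS K a0 a1 S) (D : EvenDer K a0 a1 S) (r s r' s' : K)
    (u u' : a0) : devBr0 N D (r, u, s) (r', u', s') =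
      (N.B0 (D.D0 u) u', S.br0 u u' + s • D.D0 u' + s' • D.D0 u, 0) :=
  rfl

theorem devBr1_apply (D : EvenDer K a0 a1 S) (r s : K) (u : a0) (f : a1) :
    devBr1 D (r, u, s) f = S.br1 u f + s • D.D1 f :=
  rfl

theorem devBr11_apply (N : EvenNIS K a0 a1 S) (D : EvenDer K a0 a1 S) (f g : a1) :
    devBr11 N D f g = (N.B1 (D.D1 f) g, S.br11 f g, 0) :=
  rfl

theorem devB0_apply (N : EvenNIS K a0 a1 S) (c r s r' s' : K) (u u' : a0) :
    devB0 N c (r, u, s) (r', u', s') = N.B0 u u' + r * s' + r' * s + c * (s * s') :=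
  rfl

variable [CharP K 2]

/-- The Lie superalgebra structure of the `D_ev`-extension. -/
def devAlg (N : EvenNIS K a0 a1 S) (D : EvenDer K a0 a1 S) (al : a1 → K)
    (h : DevDataEven K a0 a1 S N D al) : SuperAlg K (K × a0 × K) a1 where
  br0 := devBr0 N D
  br1 := devBr1 D
  br11 := devBr11 N D
  sq f := (al f, S.sq f, 0)
  sq_smul t f := by simp [h.2.2.2.1, S.sq_smul]
  sq_add f g := by
    have two : (2 : K) = 0 := CharTwo.two_eq_zero
    ext
    · simp only [devBr11_apply, Prod.fst_add]
      linear_combination (N.B1 f (D.D1 g)) * two - h.2.2.2.2 f g - h.2.1 f g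
    · simp [devBr11_apply, S.sq_add]
    · simp [devBr11_apply]
  br0_self := by
    rintro ⟨r, u, s⟩
    have two : (2 : K) = 0 := CharTwo.two_eq_zero
    rw [devBr0_apply, h.2.2.1, S.br0_self]
    ext
    · rfl
    · simp only [Prod.snd_zero, Prod.fst_zero]
      linear_combination (norm := module) two • (s • D.D0 u)
    · rfl
  br11_comm f g := by
    have two : (2 : K) = 0 := CharTwo.two_eq_zero
    rw [devBr11_apply, devBr11_apply, S.br11_comm f g]
    congr 1
    linear_combination h.2.1 f g - N.B1 f (D.D1 g) * two + N.symm1 f (D.D1 g)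
  jacobi0 := by
    rintro ⟨r, u, s⟩ ⟨r', v, s'⟩ ⟨r'', w, s''⟩
    have two : (2 : K) = 0 := CharTwo.two_eq_zero
    simp only [devBr0_apply]
    ext
    · simp only [Prod.fst_add, Prod.fst_zero, map_add, map_smul, smul_eq_mul]
      have e1 := N.inv0 (D.D0 u) v w
      have e2 := congrArg (fun z => N.B0 z w) (D.der0 u v)
      simp only [map_add, LinearMap.add_apply] at e2
      have e3 := h.1 (S.br0 u v) w
      have e4 := N.symm0 (S.br0 u v) (D.D0 w)
      have e5 := N.inv0 w u (D.D0 v)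
      have e6 := N.symm0 (S.br0 w u) (D.D0 v)
      have e7 := N.symm0 w (S.br0 u (D.D0 v))
      have e8 := N.symm0 (D.D0 u) (D.D0 v)
      have e9 := N.symm0 (D.D0 v) (D.D0 w)
      have e10 := N.symm0 (D.D0 u) (D.D0 w)
      grind
    · simp only [Prod.fst_add, Prod.snd_add, Prod.fst_zero, Prod.snd_zero, map_add, map_smul,
        zero_smul, add_zero, D.der0]
      have e1 := S.br0_comm (D.D0 u) v
      have e2 := S.br0_comm (D.D0 v) w
      have e3 := S.br0_comm (D.D0 w) u
      have j := S.jacobi0 u v w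
      rw [e1, e2, e3]
      linear_combination (norm := module) j + two • (s • S.br0 w (D.D0 v) + s • S.br0 v (D.D0 w)
        + s' • S.br0 w (D.D0 u) + s' • S.br0 u (D.D0 w) + s'' • S.br0 u (D.D0 v)
        + s'' • S.br0 v (D.D0 u) + (s * s') • D.D0 (D.D0 w)
        + (s * s'') • D.D0 (D.D0 v) + (s' * s'') • D.D0 (D.D0 u))
    · simp
  act_br := by
    rintro ⟨r, u, s⟩ ⟨r', v, s'⟩ f
    have two : (2 : K) = 0 := CharTwo.two_eq_zero
    simp only [devBr0_apply, devBr1_apply, map_add, map_smul, LinearMap.add_apply,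
      LinearMap.smul_apply, S.act_br, D.der1, zero_smul, add_zero]
    linear_combination (norm := module) -two • (s' • S.br1 u (D.D1 f) + s • S.br1 v (D.D1 f)
      + (s * s') • D.D1 (D.D1 f))
  jacobi_mix := by
    rintro ⟨r, u, s⟩ f g
    have two : (2 : K) = 0 := CharTwo.two_eq_zero
    simp only [devBr0_apply, devBr1_apply, devBr11_apply]
    ext
    · simp only [Prod.fst_add, Prod.fst_zero, map_add, map_smul, smul_eq_mul]
      have e1 := N.inv1 (D.D0 u) f g
      have e2 := h.2.1 g (S.br1 u f)
      have e3 := congrArg (N.B1 g) (D.der1 u f)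
      simp only [map_add] at e3
      have e4 := N.symm1 (S.br1 (D.D0 u) f) g
      have e5 := N.inv1 u g (D.D1 f)
      have e6 := N.inv2 g (D.D1 f) u
      have e7 := N.symm0 u (S.br11 g (D.D1 f))
      have e8 := N.symm1 (D.D1 f) (S.br1 u g)
      have e9 := N.symm1 (D.D1 f) (D.D1 g)
      grind
    · simp only [Prod.fst_add, Prod.snd_add, Prod.fst_zero, Prod.snd_zero, map_add, map_smul,
        zero_smul, add_zero, D.map_br11, S.br11_comm g (D.D1 f)]
      linear_combination (norm := module) S.jacobi_mix u f g
        + two • (s • S.br11 (D.D1 f) g + s • S.br11 f (D.D1 g))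
    · simp
  sq_br0 := by
    rintro f ⟨r, u, s⟩
    simp only [devBr0_apply, devBr1_apply, devBr11_apply, D.der_sq]
    ext
    · simp only [map_add, map_smul, N.alt1, smul_zero, add_zero, N.inv2]
    · simp only [map_add, map_smul, zero_smul, add_zero, S.sq_br0, S.br11_comm (D.D1 f) f]
    · rfl
  sq_br1 f g := by
    simp only [devBr1_apply, devBr11_apply, zero_smul, add_zero, S.sq_br1]

/-- The even non-degenerate invariant symmetric form of the `D_ev`-extension. -/
def devNIS (N : EvenNIS K a0 a1 S) (D : EvenDer K a0 a1 S) (al : a1 → K)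
    (h : DevDataEven K a0 a1 S N D al) (c : K) :
    EvenNIS K (K × a0 × K) a1 (devAlg N D al h) where
  B0 := devB0 N c
  B1 := N.B1
  symm0 := by
    rintro ⟨r, u, s⟩ ⟨r', v, s'⟩
    simp only [devB0_apply]
    linear_combination N.symm0 u v
  symm1 := N.symm1
  alt1 := N.alt1
  nondeg0 := by
    rintro ⟨r, u, s⟩ hx
    have hs : s = 0 := by simpa [devB0_apply] using hx (1, 0, 0)
    have hr : r = 0 := by simpa [devB0_apply, hs] using hx (0, 0, 1)
    have hu : u = 0 := N.nondeg0 u fun v => by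
      simpa [devB0_apply, hs] using hx (0, v, 0)
    simp [hr, hu, hs]
  nondeg1 := N.nondeg1
  inv0 := by
    rintro ⟨r, u, s⟩ ⟨r', v, s'⟩ ⟨r'', w, s''⟩
    have two : (2 : K) = 0 := CharTwo.two_eq_zero
    simp only [devAlg, devBr0_apply, devB0_apply, map_add, map_smul, LinearMap.add_apply,
      LinearMap.smul_apply, smul_eq_mul]
    linear_combination N.inv0 u v w + s' * h.1 u w + s'' * h.1 u v
      - (s' * N.B0 u (D.D0 w) + s'' * N.B0 u (D.D0 v)) * two
  inv1 := by
    rintro ⟨r, u, s⟩ f g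
    simp only [devAlg, devBr1_apply, devBr11_apply, devB0_apply, map_add, map_smul,
      LinearMap.add_apply, LinearMap.smul_apply, smul_eq_mul]
    linear_combination N.inv1 u f g
  inv2 := by
    rintro f g ⟨r, u, s⟩
    have two : (2 : K) = 0 := CharTwo.two_eq_zero
    simp only [devAlg, devBr1_apply, devBr11_apply, devB0_apply, map_add, map_smul, smul_eq_mul]
    linear_combination N.inv2 f g u + s * h.2.1 f g - s * N.B1 f (D.D1 g) * two

end DevExtension

/-- Theorem 3.1 of the paper: the `D_ev`-extension of a
NIS-Lie superalgebra `(a, B_a)` in characteristic 2 with `B_a` even, by means of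
an even derivation `D` and a quadratic form `α`, is again a NIS-Lie superalgebra
with an even form: there is a Lie superalgebra structure on
`g = Kx ⊕ a ⊕ Kx*` (with `x`, `x*` even) together with an even, non-degenerate,
symmetric, invariant bilinear form, given by the prescribed formulas, for any
value `c` of `B_g(x*, x*)`. -/
theorem stmt0 (K : Type) [Field K] [CharP K 2] (a0 a1 : Type)
    [AddCommGroup a0] [Module K a0] [AddCommGroup a1] [Module K a1]
    [FiniteDimensional K a0] [FiniteDimensional K a1]
    (S : SuperAlg K a0 a1) (N : EvenNIS K a0 a1 S)
    (D : EvenDer K a0 a1 S) (al : a1 → K)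
    (hdata : DevDataEven K a0 a1 S N D al)
    (c : K) :
    ∃ (T : SuperAlg K (K × a0 × K) a1) (M : EvenNIS K (K × a0 × K) a1 T),
      DevExtEvenFormulas K a0 a1 S N D al c T M := by
  exact ⟨devAlg N D al hdata, devNIS N D al hdata c,
    devBr0_apply N D, devBr1_apply D, fun _ => rfl, devB0_apply N c, fun _ _ => rfl⟩

end Char2DoubleExt
end

section
/- Let (a,B_a) be a NIS-Lie superalgebra over a field K of characteristic 2 with B_a even. Let D be an odd derivation of a and a_0 ∈ a_0 satisfy B_a(D(u),v) = B_a(u,D(v)) for all u,v ∈ a, D² = ad_{a_0}, and D(a_0) = 0. Then on g := Kx ⊕ a ⊕ Kx* with x and x* odd, the squaring s_g(rx + u + tx*) := s_a(u) + t²a_0 + tD(u) for rx + u + tx* ∈ g_1, together with the bracket [x,g]_g := 0, [u,v]_g := [u,v]_a + B_a(D(u),v)x for u,v ∈ a, and [x*,u]_g := D(u), defines a Lie superalgebra structure on g; moreover the bilinear form B_g determined by B_g|_{a×a} = B_a, B_g(a,x) = B_g(a,x*) = 0, B_g(x,x*) = 1, B_g(x,x) = B_g(x*,x*) = 0 is even,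 non-degenerate, symmetric and invariant, so that (g,B_g) is a NIS-Lie superalgebra (called the D_od-extension of (a,B_a) by means of D and a_0). -/
namespace Char2DoubleExt

section DodExtension

variable {K : Type} [Field K] {a0 a1 : Type}
variable [AddCommGroup a0] [Module K a0] [AddCommGroup a1] [Module K a1]

theorem add_self_eq_zero_of_two_eq_zero {V : Type} [AddCommGroup V] [Module K V]
    (h : (2 : K) = 0) (v : V) : v + v = 0 := by
  rw [← two_smul K v, h, zero_smul]

theorem SuperAlg.br11_self (S : SuperAlg K a0 a1) (h : (2 : K) = 0) (f : a1) :
    S.br11 f f = 0 := by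
  have hadd := S.sq_add f f
  have hzero : S.sq 0 = 0 := by simpa using S.sq_smul 0 0
  rwa [add_self_eq_zero_of_two_eq_zero h, hzero, add_self_eq_zero_of_two_eq_zero h,
    zero_add, eq_comm] at hadd

theorem OddDer.D0_br11 {S : SuperAlg K a0 a1} (D : OddDer K a0 a1 S) (f g : a1) :
    D.D0 (S.br11 f g) = S.br1 (D.D1 f) g + S.br1 (D.D1 g) f := by
  have h := D.der_sq (f + g)
  simp only [S.sq_add, map_add, LinearMap.add_apply, D.der_sq] at h
  linear_combination (norm := module) h

theorem EvenNIS.B1_br1_left {S : SuperAlg K a0 a1} (N : EvenNIS K a0 a1 S)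
    (x : a0) (f g : a1) : N.B1 (S.br1 x f) g = N.B1 f (S.br1 x g) := by
  rw [N.inv1, N.symm0, N.inv2]

theorem EvenNIS.B1_br1_comm {S : SuperAlg K a0 a1} (N : EvenNIS K a0 a1 S)
    (x : a0) (f g : a1) : N.B1 (S.br1 x f) g = N.B1 (S.br1 x g) f := by
  rw [N.inv1, N.inv1, S.br11_comm]

/-- The action of the even part on the odd part of the `D_od`-extension. -/
def dodBr1 (S : SuperAlg K a0 a1) (N : EvenNIS K a0 a1 S) (D : OddDer K a0 a1 S) :
    a0 →ₗ[K] (K × a1 × K) →ₗ[K] (K × a1 × K) :=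
  LinearMap.mk₂ K (fun x f => (N.B1 (D.D0 x) f.2.1, S.br1 x f.2.1 + f.2.2 • D.D0 x, 0))
    (fun x y f => by ext <;> simp; module)
    (fun c x f => by ext <;> simp; module)
    (fun x f g => by ext <;> simp; module)
    (fun c x f => by ext <;> simp; module)

/-- The bracket of odd elements of the `D_od`-extension. -/
def dodBr11 (S : SuperAlg K a0 a1) (D : OddDer K a0 a1 S) :
    (K × a1 × K) →ₗ[K] (K × a1 × K) →ₗ[K] a0 :=
  LinearMap.mk₂ K
    (fun f g => S.br11 f.2.1 g.2.1 + f.2.2 • D.D1 g.2.1 + g.2.2 • D.D1 f.2.1)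
    (fun f f' g => by simp; module)
    (fun c f g => by simp; module)
    (fun f g g' => by simp; module)
    (fun c f g => by simp; module)

/-- The odd component of the bilinear form of the `D_od`-extension. -/
def dodB1 {S : SuperAlg K a0 a1} (N : EvenNIS K a0 a1 S) :
    (K × a1 × K) →ₗ[K] (K × a1 × K) →ₗ[K] K :=
  LinearMap.mk₂ K (fun f g => N.B1 f.2.1 g.2.1 + f.1 * g.2.2 + g.1 * f.2.2)
    (fun f f' g => by simp; ring)
    (fun c f g => by simp; ring)
    (fun f g g' => by simp; ring)
    (fun c f g => by simp; ring)

theorem dodBr1_apply (S : SuperAlg K a0 a1) (N : EvenNIS K a0 a1 S) (D : OddDer K a0 a1 S)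
    (x : a0) (f : K × a1 × K) :
    dodBr1 S N D x f = (N.B1 (D.D0 x) f.2.1, S.br1 x f.2.1 + f.2.2 • D.D0 x, 0) := rfl

theorem dodBr11_apply (S : SuperAlg K a0 a1) (D : OddDer K a0 a1 S) (f g : K × a1 × K) :
    dodBr11 S D f g
      = S.br11 f.2.1 g.2.1 + f.2.2 • D.D1 g.2.1 + g.2.2 • D.D1 f.2.1 := rfl

theorem dodB1_apply {S : SuperAlg K a0 a1} (N : EvenNIS K a0 a1 S) (f g : K × a1 × K) :
    dodB1 N f g = N.B1 f.2.1 g.2.1 + f.1 * g.2.2 + g.1 * f.2.2 := rfl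

/-- The Lie superalgebra structure of the `D_od`-extension. -/
def dodAlg (h2 : (2 : K) = 0) (S : SuperAlg K a0 a1) (N : EvenNIS K a0 a1 S)
    (D : OddDer K a0 a1 S) (w : a0) (hdata : DodDataEven K a0 a1 S N D w) :
    SuperAlg K a0 (K × a1 × K) where
  br0 := S.br0
  br1 := dodBr1 S N D
  br11 := dodBr11 S D
  sq f := S.sq f.2.1 + (f.2.2 * f.2.2) • w + f.2.2 • D.D1 f.2.1
  sq_smul c f := by
    simp only [Prod.smul_fst, Prod.smul_snd, S.sq_smul, map_smul, smul_eq_mul]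
    module
  sq_add f g := by
    simp only [Prod.fst_add, Prod.snd_add, S.sq_add, map_add, dodBr11_apply]
    have hw := congrArg (fun c : K => (c * (f.2.2 * g.2.2)) • w) h2
    linear_combination (norm := module) hw
  br0_self := S.br0_self
  br11_comm f g := by
    simp only [dodBr11_apply, S.br11_comm f.2.1 g.2.1]
    module
  jacobi0 := S.jacobi0
  act_br x y f := by
    ext
    · simp only [dodBr1_apply, Prod.fst_add, map_add, map_smul, LinearMap.add_apply,
        D.der0, smul_eq_mul, N.B1_br1_left, N.symm1 (D.D0 y) (D.D0 x)]
      linear_combination -(f.2.2 * N.B1 (D.D0 x) (D.D0 y)) * h2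
    · simp only [dodBr1_apply, Prod.fst_add, Prod.snd_add, map_add, map_smul, S.act_br, D.der0]
      module
    · simp [dodBr1_apply]
  jacobi_mix x f g := by
    have hj := S.jacobi_mix x f.2.1 g.2.1
    have hz := add_self_eq_zero_of_two_eq_zero (V := a0) h2
    have e1 := hz (f.2.2 • S.br0 x (D.D1 g.2.1))
    have e2 := hz (g.2.2 • S.br0 x (D.D1 f.2.1))
    have e3 := hz (g.2.2 • S.br11 f.2.1 (D.D0 x))
    have e4 := hz (f.2.2 • S.br11 g.2.1 (D.D0 x))
    have e5 := hz ((f.2.2 * g.2.2) • D.D1 (D.D0 x))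
    simp only [dodBr1_apply, dodBr11_apply, map_add, map_smul, D.der1,
      S.br11_comm (D.D0 x)]
    linear_combination (norm := module) hj + e1 + e2 + e3 + e4 + e5
  sq_br0 f x := by
    obtain ⟨-, hD, -, -⟩ := hdata
    have hz := add_self_eq_zero_of_two_eq_zero (V := a0) h2
    have hc : S.br0 (D.D1 f.2.1) x = S.br0 x (D.D1 f.2.1) := by
      have h := S.br0_self (D.D1 f.2.1 + x)
      simp only [map_add, LinearMap.add_apply, S.br0_self] at h
      linear_combination (norm := module) h - hz (S.br0 x (D.D1 f.2.1))
    have e := hz (f.2.2 • S.br11 f.2.1 (D.D0 x))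
    simp only [dodBr1_apply, dodBr11_apply, map_add, map_smul, LinearMap.add_apply,
      LinearMap.smul_apply, D.der1, S.br11_comm (D.D0 x), hD, S.sq_br0, hc]
    linear_combination (norm := module) -e
  sq_br1 f g := by
    obtain ⟨-, -, hD, hw⟩ := hdata
    ext
    · simp only [dodBr1_apply, dodBr11_apply]
      simp only [map_add, map_smul, LinearMap.add_apply, LinearMap.smul_apply, D.der_sq,
        D.D0_br11, hD, hw, smul_eq_mul]
      have e (x : a0) : N.B1 (S.br1 x f.2.1) f.2.1 = 0 := by
        rw [N.inv1, S.br11_self h2, map_zero]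
      simp only [e, map_zero, LinearMap.zero_apply, N.B1_br1_comm _ g.2.1 f.2.1]
      ring
    · have hz := add_self_eq_zero_of_two_eq_zero (V := a1) h2
      have e1 := hz (f.2.2 • S.br1 (D.D1 g.2.1) f.2.1)
      simp only [dodBr1_apply, dodBr11_apply]
      simp only [map_add, map_smul, LinearMap.add_apply, LinearMap.smul_apply, D.der_sq,
        D.D0_br11, hD, hw, S.sq_br1]
      linear_combination (norm := module) -e1
    · rfl

/-- The non-degenerate invariant even form of the `D_od`-extension. -/
def dodNIS (h2 : (2 : K) = 0) (S : SuperAlg K a0 a1) (N : EvenNIS K a0 a1 S)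
    (D : OddDer K a0 a1 S) (w : a0) (hdata : DodDataEven K a0 a1 S N D w) :
    EvenNIS K a0 (K × a1 × K) (dodAlg h2 S N D w hdata) where
  B0 := N.B0
  B1 := dodB1 N
  symm0 := N.symm0
  symm1 f g := by
    rw [dodB1_apply, dodB1_apply, N.symm1]
    ring
  alt1 f := by
    rw [dodB1_apply, N.alt1]
    linear_combination f.1 * f.2.2 * h2
  nondeg0 := N.nondeg0
  nondeg1 f hf := by
    simp only [dodB1_apply] at hf
    ext
    · simpa using hf (0, 0, 1)
    · exact N.nondeg1 _ fun g => by simpa using hf (0, g, 0)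
    · simpa using hf (1, 0, 0)
  inv0 := N.inv0
  inv1 x f g := by
    change dodB1 N (dodBr1 S N D x f) g = N.B0 x (dodBr11 S D f g)
    simp only [dodB1_apply, dodBr1_apply, dodBr11_apply, map_add, map_smul,
      LinearMap.add_apply, LinearMap.smul_apply, N.inv1, hdata.1, smul_eq_mul]
    ring
  inv2 f g x := by
    change N.B0 (dodBr11 S D f g) x = dodB1 N f (dodBr1 S N D x g)
    simp only [dodB1_apply, dodBr1_apply, dodBr11_apply, map_add, map_smul,
      LinearMap.add_apply, LinearMap.smul_apply, N.inv2, N.symm1 f.2.1 (D.D0 x), hdata.1,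
      N.symm0 _ x, smul_eq_mul]
    ring

end DodExtension

/-- Theorem 3.4 of the paper: the `D_od`-extension of a
NIS-Lie superalgebra `(a, B_a)` in characteristic 2 with `B_a` even, by means of
an odd derivation `D` and an even element `a₀ = w` with `B(Du,v) = B(u,Dv)`,
`D² = ad_w` and `D(w) = 0`, is again a NIS-Lie superalgebra with an even form:
there is a Lie superalgebra structure on `g = Kx ⊕ a ⊕ Kx*` (with `x`, `x*`
odd), with the prescribed squaring, bracket and bilinear form. -/
theorem stmt3 (K : Type) [Field K] [CharP K 2] (a0 a1 : Type)
    [AddCommGroup a0] [Module K a0] [AddCommGroup a1] [Module K a1]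
    [FiniteDimensional K a0] [FiniteDimensional K a1]
    (S : SuperAlg K a0 a1) (N : EvenNIS K a0 a1 S)
    (D : OddDer K a0 a1 S) (w : a0)
    (hdata : DodDataEven K a0 a1 S N D w) :
    ∃ (T : SuperAlg K a0 (K × a1 × K)) (M : EvenNIS K a0 (K × a1 × K) T),
      DodExtEvenFormulas K a0 a1 S N D w T M := by
  have h2 : (2 : K) = 0 := CharTwo.two_eq_zero
  exact ⟨dodAlg h2 S N D w hdata, dodNIS h2 S N D w hdata, fun _ _ => rfl,
    fun _ _ _ _ => rfl, fun _ _ _ => rfl, fun _ _ => rfl, fun _ _ _ _ _ _ => rfl⟩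

end Char2DoubleExt
end

section
/- Let (g,B_g) be an irreducible finite-dimensional NIS-Lie superalgebra over a field K of characteristic 2 with B_g even, and define the cone C(g,B_g) := {u ∈ g_1 : B_g(s_g(u), s_g(v)) = 0 for all v ∈ g_1}. If z(g)_1 ∩ C(g,B_g) ≠ {0}, then (g,B_g) is obtained either as a D_ev-extension or as a D_od-extension of a NIS-Lie superalgebra (a,B_a) of dimension dim(g) − 2. -/
namespace Char2DoubleExt

section HyperbolicPair

variable {K V : Type} [Field K] [AddCommGroup V] [Module K V]

theorem neg_eq_self_of_charTwo (K : Type) {V : Type} [Field K] [CharP K 2] [AddCommGroup V]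
    [Module K V] (v : V) : -v = v := by
  rw [← neg_one_smul K v, CharTwo.neg_eq, one_smul]

theorem add_self_of_charTwo (K : Type) {V : Type} [Field K] [CharP K 2] [AddCommGroup V]
    [Module K V] (v : V) : v + v = 0 := by
  nth_rewrite 1 [← neg_eq_self_of_charTwo K v]
  exact neg_add_cancel v

/-- A pair `x`, `xs` with `x` isotropic and `B x xs = 1`, for a symmetric form `B`. -/
structure IsHyperbolicPair (B : V →ₗ[K] V →ₗ[K] K) (x xs : V) : Prop where
  symm : ∀ u v, B u v = B v u
  self : B x x = 0
  pair : B x xs = 1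

/-- The common orthogonal of two vectors. -/
def orthPair (B : V →ₗ[K] V →ₗ[K] K) (x xs : V) : Submodule K V :=
  LinearMap.ker (B x) ⊓ LinearMap.ker (B xs)

variable {B : V →ₗ[K] V →ₗ[K] K} {x xs : V}

theorem mem_orthPair {v : V} : v ∈ orthPair B x xs ↔ B x v = 0 ∧ B xs v = 0 := Iff.rfl

namespace IsHyperbolicPair

theorem pair' (h : IsHyperbolicPair B x xs) : B xs x = 1 := by rw [h.symm, h.pair]

theorem notMem_span (h : IsHyperbolicPair B x xs) : xs ∉ Submodule.span K ({x} : Set V) := by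
  intro hm
  obtain ⟨c, rfl⟩ := Submodule.mem_span_singleton.1 hm
  simpa [h.self] using h.pair

/-- The projection onto the orthogonal of a hyperbolic pair. -/
def proj (h : IsHyperbolicPair B x xs) : V →ₗ[K] orthPair B x xs :=
  LinearMap.codRestrict _
    (LinearMap.id - (B x).smulRight xs - (B xs - B xs xs • B x).smulRight x)
    fun v => by
      refine mem_orthPair.2 ⟨?_, ?_⟩
      · simp [h.self, h.pair]
      · simp [h.pair', mul_comm]

theorem coe_proj (h : IsHyperbolicPair B x xs) (v : V) :
    (h.proj v : V) = v - B x v • xs - (B xs v - B xs xs * B x v) • x := rfl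

theorem coe_proj_of_orth (h : IsHyperbolicPair B x xs)
    {v : V} (hv : B x v = 0) : (h.proj v : V) = v - B xs v • x := by
  simp [coe_proj, hv]

theorem eq_add_proj (h : IsHyperbolicPair B x xs)
    {v : V} (hv : B x v = 0) : v = B xs v • x + h.proj v := by
  rw [h.coe_proj_of_orth hv]; abel

theorem proj_coe (h : IsHyperbolicPair B x xs) (u : orthPair B x xs) : h.proj u = u := by
  ext
  simp [coe_proj, (mem_orthPair.1 u.2).1, (mem_orthPair.1 u.2).2]

theorem map_coe_proj (h : IsHyperbolicPair B x xs)
    {W : Type} [AddCommGroup W] [Module K W] (L : V →ₗ[K] W)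
    (hL : L x = 0) {v : V} (hv : B x v = 0) : L (h.proj v) = L v := by
  simp [h.coe_proj_of_orth hv, hL]

theorem apply_proj_left (h : IsHyperbolicPair B x xs)
    {v : V} (hv : B x v = 0) (u : orthPair B x xs) :
    B (h.proj v) u = B v u := by
  simp [h.coe_proj_of_orth hv, (mem_orthPair.1 u.2).1]

theorem apply_proj_right (h : IsHyperbolicPair B x xs)
    {v : V} (hv : B x v = 0) (u : orthPair B x xs) :
    B u (h.proj v) = B u v := by
  rw [h.symm, h.apply_proj_left hv, h.symm]

theorem coe_proj_of_mem (h : IsHyperbolicPair B x xs)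
    {v : V} (hv : v ∈ orthPair B x xs) : (h.proj v : V) = v :=
  congrArg Subtype.val (h.proj_coe ⟨v, hv⟩)

theorem nondeg (h : IsHyperbolicPair B x xs)
    (hB : ∀ u, (∀ v, B u v = 0) → u = 0) (u : orthPair B x xs)
    (hu : ∀ v : orthPair B x xs, B u v = 0) : u = 0 := by
  refine Subtype.ext (hB _ fun v => ?_)
  have := hu (h.proj v)
  simpa [coe_proj, h.symm u x, h.symm u xs, (mem_orthPair.1 u.2).1,
    (mem_orthPair.1 u.2).2] using this

theorem isCompl (h : IsHyperbolicPair B x xs) :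
    IsCompl (Submodule.span K ({x, xs} : Set V)) (orthPair B x xs) := by
  constructor
  · rw [Submodule.disjoint_def]
    intro v hv hA
    obtain ⟨a, b, rfl⟩ := Submodule.mem_span_pair.1 hv
    obtain ⟨h1, h2⟩ := mem_orthPair.1 hA
    have hb : b = 0 := by simpa [h.self, h.pair] using h1
    have ha : a = 0 := by simpa [h.pair', hb] using h2
    simp [ha, hb]
  · rw [codisjoint_iff, eq_top_iff]
    intro v _
    refine Submodule.mem_sup.2 ⟨_, Submodule.mem_span_pair.2
      ⟨B xs v - B xs xs * B x v, B x v, rfl⟩, h.proj v, (h.proj v).2, ?_⟩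
    rw [coe_proj]; abel

theorem finrank_orthPair (h : IsHyperbolicPair B x xs) [FiniteDimensional K V] :
    Module.finrank K (orthPair B x xs) + 2 = Module.finrank K V := by
  have hli : LinearIndependent K ![x, xs] := by
    rw [LinearIndependent.pair_iff]
    intro a b hab
    have hb : b = 0 := by simpa [h.self, h.pair] using congrArg (B x) hab
    have ha : a = 0 := by simpa [h.pair', hb] using congrArg (B xs) hab
    exact ⟨ha, hb⟩
  have h2 := finrank_span_eq_card hli
  rw [Matrix.range_cons, Matrix.range_cons, Matrix.range_empty, Set.union_empty,
    Set.singleton_union, Fintype.card_fin] at h2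
  rw [← Submodule.finrank_add_eq_of_isCompl h.isCompl, h2, add_comm]

end IsHyperbolicPair

end HyperbolicPair

section SuperAlg

variable {K : Type} [Field K] {g0 g1 : Type}
variable [AddCommGroup g0] [Module K g0] [AddCommGroup g1] [Module K g1]

theorem B1_central_br1 {S : SuperAlg K g0 g1} {N : EvenNIS K g0 g1 S} {x : g1}
    (hx1 : ∀ f : g1, S.br11 x f = 0) (y : g0) (f : g1) : N.B1 x (S.br1 y f) = 0 := by
  rw [← N.inv2, hx1]; simp

theorem B0_central_br0 {S : SuperAlg K g0 g1} {N : EvenNIS K g0 g1 S} {x : g0}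
    (hx0 : ∀ y : g0, S.br0 x y = 0) (y z : g0) : N.B0 x (S.br0 y z) = 0 := by
  rw [← N.inv0, hx0]; simp

theorem B0_central_br11 {S : SuperAlg K g0 g1} {N : EvenNIS K g0 g1 S} {x : g0}
    (hx1 : ∀ f : g1, S.br1 x f = 0) (f g : g1) : N.B0 x (S.br11 f g) = 0 := by
  rw [← N.inv1, hx1]; simp

theorem br0_mem_orthPair {S : SuperAlg K g0 g1} {N : EvenNIS K g0 g1 S} {x xs : g0}
    (hx0 : ∀ y : g0, S.br0 x y = 0) (y : g0) : S.br0 xs y ∈ orthPair N.B0 x xs := by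
  refine mem_orthPair.2 ⟨B0_central_br0 hx0 xs y, ?_⟩
  rw [← N.inv0, S.br0_self]; simp

variable [CharP K 2]

namespace SuperAlg

variable (S : SuperAlg K g0 g1)

theorem br11_self_s4 (f : g1) : S.br11 f f = 0 := by
  have h := S.sq_add f f
  have h0 : S.sq 0 = 0 := by simpa using S.sq_smul 0 0
  rw [add_self_of_charTwo K f, h0, add_self_of_charTwo K, zero_add] at h
  exact h.symm

theorem br0_comm_s4 (x y : g0) : S.br0 x y = S.br0 y x := by
  have h := S.br0_self (x + y)
  simp only [map_add, LinearMap.add_apply, S.br0_self, zero_add, add_zero] at h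
  rw [← neg_eq_self_of_charTwo K (S.br0 y x)]
  exact eq_neg_of_add_eq_zero_right h

theorem br11_br1 (x : g0) (f g : g1) :
    S.br11 f (S.br1 x g) = S.br11 (S.br1 x f) g + S.br0 x (S.br11 f g) := by
  have h := S.jacobi_mix x f g
  rw [← neg_eq_self_of_charTwo K (S.br11 f (S.br1 x g)), neg_eq_iff_add_eq_zero, ← h,
    S.br11_comm g]
  abel

theorem br0_br0 (x y z : g0) :
    S.br0 x (S.br0 y z) = S.br0 (S.br0 x y) z + S.br0 y (S.br0 x z) := by
  have h := S.jacobi0 x y z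
  rw [← neg_eq_self_of_charTwo K (S.br0 x _), neg_eq_iff_add_eq_zero, ← h,
    S.br0_comm_s4 (S.br0 x y) z, S.br0_comm_s4 x z]
  abel

end SuperAlg

/-! ### Reduction by an odd central vector -/

section Odd

variable {S : SuperAlg K g0 g1} {N : EvenNIS K g0 g1 S} {x xs : g1}

theorem br1_mem_orthPair (hx1 : ∀ f : g1, S.br11 x f = 0) (y : g0) :
    S.br1 y xs ∈ orthPair N.B1 x xs := by
  refine mem_orthPair.2 ⟨B1_central_br1 hx1 y xs, ?_⟩
  rw [← N.inv2, S.br11_self_s4]; simp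

variable
  (h : IsHyperbolicPair N.B1 x xs) (hx0 : ∀ y : g0, S.br1 y x = 0)
  (hx1 : ∀ f : g1, S.br11 x f = 0)

/-- The Lie superalgebra structure on `x^⊥ / Kx`, for `x` odd and central. -/
def oddReduction : SuperAlg K g0 (orthPair N.B1 x xs) where
  br0 := S.br0
  br1 := LinearMap.mk₂ K (fun y f => h.proj (S.br1 y f))
    (by simp) (by simp) (by simp) (by simp)
  br11 := LinearMap.mk₂ K (fun f g => S.br11 f g) (by simp) (by simp) (by simp) (by simp)
  sq f := S.sq f
  sq_smul c f := S.sq_smul c f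
  sq_add f g := S.sq_add f g
  br0_self := S.br0_self
  br11_comm f g := S.br11_comm f g
  jacobi0 := S.jacobi0
  act_br y z f := by
    have key := fun y z => h.map_coe_proj (S.br1 y) (hx0 y)
      (B1_central_br1 (N := N) hx1 z f)
    simp only [LinearMap.mk₂_apply, key, ← map_add, S.act_br]
  jacobi_mix y f g := by
    have key := fun f g => h.map_coe_proj (S.br11 f)
      (by rw [S.br11_comm, hx1]) (B1_central_br1 (N := N) hx1 y g)
    simp only [LinearMap.mk₂_apply, key, S.jacobi_mix]
  sq_br0 f y := by
    have key := fun f g => h.map_coe_proj (S.br11 f)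
      (by rw [S.br11_comm, hx1]) (B1_central_br1 (N := N) hx1 y g)
    simp only [LinearMap.mk₂_apply, key, S.sq_br0]
  sq_br1 f g := by simp only [LinearMap.mk₂_apply, S.sq_br1]

/-- The form induced on the reduction by an odd central vector. -/
def oddReductionNIS : EvenNIS K g0 (orthPair N.B1 x xs) (oddReduction h hx0 hx1) where
  B0 := N.B0
  B1 := LinearMap.mk₂ K (fun f g => N.B1 f g) (by simp) (by simp) (by simp) (by simp)
  symm0 := N.symm0
  symm1 f g := N.symm1 f g
  alt1 f := N.alt1 f
  nondeg0 := N.nondeg0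
  nondeg1 := h.nondeg N.nondeg1
  inv0 := N.inv0
  inv1 y f g := by
    simp only [oddReduction, LinearMap.mk₂_apply]
    rw [h.apply_proj_left (B1_central_br1 hx1 y f), N.inv1]
  inv2 f g y := by
    simp only [oddReduction, LinearMap.mk₂_apply]
    rw [h.apply_proj_right (B1_central_br1 hx1 y g), N.inv2]

/-- The odd derivation `[xs, ·]` of the reduction by an odd central vector. -/
def oddReductionDer : OddDer K g0 (orthPair N.B1 x xs) (oddReduction h hx0 hx1) where
  D0 := LinearMap.codRestrict _ (S.br1.flip xs) (br1_mem_orthPair hx1)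
  D1 := S.br11 xs ∘ₗ Submodule.subtype _
  der0 y z := by
    have := h.coe_proj_of_mem (br1_mem_orthPair (N := N) (xs := xs) hx1 (S.br0 y z))
    ext
    change S.br1 (S.br0 y z) xs = (h.proj (S.br1 y (S.br1 z xs)) +
      h.proj (S.br1 z (S.br1 y xs)) : orthPair N.B1 x xs)
    rw [← map_add, ← S.act_br, this]
  der1 y f := by
    have key := h.map_coe_proj (S.br11 xs)
      (by rw [S.br11_comm, hx1]) (B1_central_br1 (N := N) hx1 y f)
    simp only [oddReduction, LinearMap.mk₂_apply, LinearMap.comp_apply,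
      Submodule.subtype_apply, key]
    exact S.br11_br1 y xs f
  der_sq f := by
    have := h.coe_proj_of_mem (br1_mem_orthPair (N := N) (xs := xs) hx1 (S.sq f))
    ext
    change S.br1 (S.sq f) xs = (h.proj (S.br1 (S.br11 xs f) f) : g1)
    rw [S.br11_comm, ← S.sq_br1, this]

theorem dodDataEven_oddReduction :
    DodDataEven K g0 _ _ (oddReductionNIS h hx0 hx1) (oddReductionDer h hx0 hx1)
      (S.sq xs) := by
  refine ⟨fun y f => N.inv1 y xs f, fun y => (S.sq_br0 xs y).symm, fun f => ?_, ?_⟩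
  · have := h.coe_proj_of_mem (br1_mem_orthPair (N := N) (xs := xs) hx1 (S.br11 xs f))
    ext
    change S.br1 (S.br11 xs f) xs = (h.proj (S.br1 (S.sq xs) f) : g1)
    rw [S.sq_br1, this]
  · ext
    change S.br1 (S.sq xs) xs = 0
    rw [S.sq_br1, S.br11_self_s4]; simp

end Odd

/-! ### Reduction by an even central isotropic vector orthogonal to all squares -/

section Even

variable {S : SuperAlg K g0 g1} {N : EvenNIS K g0 g1 S} {x xs : g0}
  (h : IsHyperbolicPair N.B0 x xs) (hx0 : ∀ y : g0, S.br0 x y = 0)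
  (hx1 : ∀ f : g1, S.br1 x f = 0) (hsq : ∀ f : g1, N.B0 x (S.sq f) = 0)

/-- The Lie superalgebra structure on `x^⊥ / Kx`, for `x` even and central. -/
def evenReduction : SuperAlg K (orthPair N.B0 x xs) g1 where
  br0 := LinearMap.mk₂ K (fun u v => h.proj (S.br0 u v))
    (by simp) (by simp) (by simp) (by simp)
  br1 := S.br1 ∘ₗ Submodule.subtype _
  br11 := LinearMap.mk₂ K (fun f g => h.proj (S.br11 f g))
    (by simp) (by simp) (by simp) (by simp)
  sq f := h.proj (S.sq f)
  sq_smul c f := by rw [S.sq_smul, map_smul]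
  sq_add f g := by simp only [LinearMap.mk₂_apply, S.sq_add, map_add]
  br0_self u := by simp only [LinearMap.mk₂_apply, S.br0_self, map_zero]
  br11_comm f g := by simp only [LinearMap.mk₂_apply, S.br11_comm f g]
  jacobi0 u v w := by
    have key := fun a b c : g0 => h.map_coe_proj (S.br0 a)
      (by rw [S.br0_comm_s4, hx0]) (B0_central_br0 (N := N) hx0 b c)
    simp only [LinearMap.mk₂_apply, key, ← map_add, S.jacobi0, map_zero]
  act_br u v f := by
    have key := h.map_coe_proj (S.br1.flip f) (hx1 f)
      (B0_central_br0 (N := N) hx0 u v)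
    simp only [LinearMap.flip_apply] at key
    simp only [LinearMap.mk₂_apply, LinearMap.comp_apply, Submodule.subtype_apply, key,
      S.act_br]
  jacobi_mix u f g := by
    have key := h.map_coe_proj (S.br0 u)
      (by rw [S.br0_comm_s4, hx0]) (B0_central_br11 (N := N) hx1 f g)
    simp only [LinearMap.mk₂_apply, LinearMap.comp_apply, Submodule.subtype_apply, key,
      ← map_add, S.jacobi_mix, map_zero]
  sq_br0 f u := by
    have key := h.map_coe_proj (S.br0.flip u) (hx0 u) (hsq f)
    simp only [LinearMap.flip_apply] at key
    simp only [LinearMap.mk₂_apply, LinearMap.comp_apply, Submodule.subtype_apply, key,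
      S.sq_br0]
  sq_br1 f g := by
    have key := h.map_coe_proj (S.br1.flip g) (hx1 g) (hsq f)
    have key' := h.map_coe_proj (S.br1.flip f) (hx1 f)
      (B0_central_br11 (N := N) hx1 f g)
    simp only [LinearMap.flip_apply] at key key'
    simp only [LinearMap.mk₂_apply, LinearMap.comp_apply, Submodule.subtype_apply, key,
      key', S.sq_br1]

/-- The form induced on the reduction by an even central vector. -/
def evenReductionNIS :
    EvenNIS K (orthPair N.B0 x xs) g1 (evenReduction h hx0 hx1 hsq) where
  B0 := LinearMap.mk₂ K (fun u v => N.B0 u v) (by simp) (by simp) (by simp) (by simp)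
  B1 := N.B1
  symm0 u v := N.symm0 u v
  symm1 := N.symm1
  alt1 := N.alt1
  nondeg0 := h.nondeg N.nondeg0
  nondeg1 := N.nondeg1
  inv0 u v w := by
    simp only [evenReduction, LinearMap.mk₂_apply]
    rw [h.apply_proj_left (B0_central_br0 hx0 _ _),
      h.apply_proj_right (B0_central_br0 hx0 _ _), N.inv0]
  inv1 u f g := by
    simp only [evenReduction, LinearMap.mk₂_apply]
    rw [h.apply_proj_right (B0_central_br11 hx1 _ _), ← N.inv1]
    rfl
  inv2 f g u := by
    simp only [evenReduction, LinearMap.mk₂_apply]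
    rw [h.apply_proj_left (B0_central_br11 hx1 _ _), N.inv2]
    rfl

/-- The even derivation `[xs, ·]` of the reduction by an even central vector. -/
def evenReductionDer :
    EvenDer K (orthPair N.B0 x xs) g1 (evenReduction h hx0 hx1 hsq) where
  D0 := LinearMap.codRestrict _ (S.br0 xs ∘ₗ Submodule.subtype _)
    fun u => br0_mem_orthPair hx0 u
  D1 := S.br1 xs
  der0 u v := by
    have key := h.map_coe_proj (S.br0 xs)
      (by rw [S.br0_comm_s4, hx0]) (B0_central_br0 (N := N) hx0 u v)
    have := h.coe_proj_of_mem (br0_mem_orthPair (N := N) (xs := xs) hx0 (S.br0 u v))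
    ext
    change S.br0 xs (h.proj (S.br0 u v)) = (h.proj (S.br0 (S.br0 xs u) v) +
      h.proj (S.br0 u (S.br0 xs v)) : orthPair N.B0 x xs)
    rw [key, ← map_add, ← S.br0_br0, this]
  der1 u f := by
    change S.br1 xs (S.br1 u f) = S.br1 (S.br0 xs u) f + S.br1 u (S.br1 xs f)
    rw [S.act_br, add_assoc, add_self_of_charTwo K, add_zero]
  der_sq f := by
    have key := h.map_coe_proj (S.br0 xs) (by rw [S.br0_comm_s4, hx0]) (hsq f)
    have := h.coe_proj_of_mem (br0_mem_orthPair (N := N) (xs := xs) hx0 (S.sq f))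
    ext
    change S.br0 xs (h.proj (S.sq f)) = (h.proj (S.br11 (S.br1 xs f) f) : g0)
    rw [key, S.br11_comm, ← S.sq_br0, S.br0_comm_s4 (S.sq f), this]

theorem devDataEven_evenReduction :
    DevDataEven K _ g1 _ (evenReductionNIS h hx0 hx1 hsq) (evenReductionDer h hx0 hx1 hsq)
      (fun f => N.B0 xs (S.sq f)) := by
  refine ⟨fun u v => ?_, fun f g => ?_, fun u => ?_, fun c f => ?_, fun f g => ?_⟩
  · change N.B0 (S.br0 xs u) v + N.B0 u (S.br0 xs v) = 0
    rw [S.br0_comm_s4, N.inv0, CharTwo.add_self_eq_zero]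
  · change N.B1 (S.br1 xs f) g + N.B1 f (S.br1 xs g) = 0
    rw [N.inv1, ← N.inv2, N.symm0, CharTwo.add_self_eq_zero]
  · change N.B0 (S.br0 xs u) u = 0
    rw [N.inv0, S.br0_self, map_zero]
  · simp only [S.sq_smul, map_smul, smul_eq_mul]
  · change N.B1 f (S.br1 xs g) = _
    rw [← N.inv2, N.symm0]
    simp only [S.sq_add, map_add]
    ring

end Even

end SuperAlg

/-- Theorem 3.7 of the paper: an irreducible
finite-dimensional NIS-Lie superalgebra `(g, B_g)` in characteristic 2 with
`B_g` even, such that `z(g)_1 ∩ C(g,B_g) ≠ {0}` where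
`C(g,B_g) = {u ∈ g_1 : B(s(u), s(v)) = 0 ∀ v}`, is obtained either as a
`D_ev`-extension or as a `D_od`-extension of a NIS-Lie superalgebra of
dimension `dim g − 2`. -/
theorem stmt4 (K : Type) [Field K] [CharP K 2] (g0 g1 : Type)
    [AddCommGroup g0] [Module K g0] [AddCommGroup g1] [Module K g1]
    [FiniteDimensional K g0] [FiniteDimensional K g1]
    (S : SuperAlg K g0 g1) (N : EvenNIS K g0 g1 S)
    (hirr : EvenIrreducible K g0 g1 S N)
    (hz : ∃ x : g1, x ≠ 0 ∧ (∀ y : g0, S.br1 y x = 0) ∧ (∀ f : g1, S.br11 x f = 0) ∧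
            (∀ v : g1, N.B0 (S.sq x) (S.sq v) = 0)) :
    -- `g` is a `D_ev`-extension (with `x`, `x*` even) ...
    (∃ (x xs : g0) (A : Submodule K g0) (T : SuperAlg K ↥A g1)
      (M : EvenNIS K ↥A g1 T) (D : EvenDer K ↥A g1 T) (al : g1 → K),
      DevDataEven K ↥A g1 T M D al ∧
      x ≠ 0 ∧ xs ∉ Submodule.span K ({x} : Set g0) ∧
      Submodule.span K ({x, xs} : Set g0) ⊓ A = ⊥ ∧
      Submodule.span K ({x, xs} : Set g0) ⊔ A = ⊤ ∧
      Module.finrank K ↥A + 2 = Module.finrank K g0 ∧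
      (∀ y : g0, S.br0 x y = 0) ∧ (∀ f : g1, S.br1 x f = 0) ∧
      (∀ u v : A, S.br0 ↑u ↑v = M.B0 (D.D0 u) v • x + ↑(T.br0 u v)) ∧
      (∀ (u : A) (f : g1), S.br1 ↑u f = T.br1 u f) ∧
      (∀ f : g1, S.br1 xs f = D.D1 f) ∧
      (∀ u : A, S.br0 xs ↑u = ↑(D.D0 u)) ∧
      (∀ f g : g1, S.br11 f g = M.B1 f (D.D1 g) • x + ↑(T.br11 f g)) ∧
      (∀ f : g1, S.sq f = al f • x + ↑(T.sq f)) ∧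
      (∀ u v : A, N.B0 ↑u ↑v = M.B0 u v) ∧
      (∀ f g : g1, N.B1 f g = M.B1 f g) ∧
      N.B0 x x = 0 ∧ N.B0 x xs = 1 ∧
      (∀ u : A, N.B0 x ↑u = 0) ∧ (∀ u : A, N.B0 xs ↑u = 0))
    ∨
    -- ... or a `D_od`-extension (with `x`, `x*` odd)
    (∃ (x xs : g1) (A : Submodule K g1) (T : SuperAlg K g0 ↥A)
      (M : EvenNIS K g0 ↥A T) (D : OddDer K g0 ↥A T) (w : g0),
      DodDataEven K g0 ↥A T M D w ∧
      x ≠ 0 ∧ xs ∉ Submodule.span K ({x} : Set g1) ∧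
      Submodule.span K ({x, xs} : Set g1) ⊓ A = ⊥ ∧
      Submodule.span K ({x, xs} : Set g1) ⊔ A = ⊤ ∧
      Module.finrank K ↥A + 2 = Module.finrank K g1 ∧
      (∀ y : g0, S.br1 y x = 0) ∧ (∀ f : g1, S.br11 x f = 0) ∧ S.sq x = 0 ∧
      (∀ y z : g0, S.br0 y z = T.br0 y z) ∧
      (∀ (y : g0) (f : A), S.br1 y ↑f = ↑(T.br1 y f) + M.B1 (D.D0 y) f • x) ∧
      (∀ y : g0, S.br1 y xs = ↑(D.D0 y)) ∧
      (∀ f g : A, S.br11 ↑f ↑g = T.br11 f g) ∧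
      (∀ f : A, S.br11 xs ↑f = D.D1 f) ∧
      (∀ f : A, S.sq ↑f = T.sq f) ∧
      S.sq xs = w ∧
      (∀ y z : g0, N.B0 y z = M.B0 y z) ∧
      (∀ f g : A, N.B1 ↑f ↑g = M.B1 f g) ∧
      N.B1 x x = 0 ∧ N.B1 x xs = 1 ∧ N.B1 xs xs = 0 ∧
      (∀ f : A, N.B1 x ↑f = 0) ∧ (∀ f : A, N.B1 xs ↑f = 0)) := by
  obtain ⟨z, hz, hz0, hz1, hC⟩ := hz
  by_cases hs : S.sq z = 0
  · right
    obtain ⟨y, hy⟩ : ∃ y, N.B1 z y ≠ 0 := by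
      by_contra! hcon
      exact hz (N.nondeg1 z hcon)
    obtain ⟨xs, hxs⟩ : ∃ xs, N.B1 z xs = 1 := ⟨(N.B1 z y)⁻¹ • y, by simp [hy]⟩
    have h : IsHyperbolicPair N.B1 z xs := ⟨N.symm1, N.alt1 z, hxs⟩
    refine ⟨z, xs, orthPair N.B1 z xs, oddReduction h hz0 hz1, oddReductionNIS h hz0 hz1,
      oddReductionDer h hz0 hz1, S.sq xs, dodDataEven_oddReduction h hz0 hz1, hz,
      h.notMem_span, h.isCompl.inf_eq_bot, h.isCompl.sup_eq_top, h.finrank_orthPair, hz0, hz1,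
      hs, fun _ _ => rfl, fun y f => ?_, fun _ => rfl, fun _ _ => rfl, fun _ => rfl,
      fun _ => rfl, rfl, fun _ _ => rfl, fun _ _ => rfl, N.alt1 z, hxs, N.alt1 xs,
      fun f => f.2.1, fun f => f.2.2⟩
    change S.br1 y f = (h.proj (S.br1 y f) : g1) + N.B1 (S.br1 y xs) f • z
    rw [N.inv1, S.br11_comm, ← N.inv1, N.symm1, add_comm]
    exact h.eq_add_proj (B1_central_br1 hz1 y f)
  · left
    have hx0 : ∀ y, S.br0 (S.sq z) y = 0 := fun y => by rw [S.sq_br0, hz1]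
    have hx1 : ∀ f, S.br1 (S.sq z) f = 0 := fun f => by rw [S.sq_br1, hz1]; simp
    obtain ⟨y, hy⟩ : ∃ y, N.B0 (S.sq z) y ≠ 0 := by
      by_contra! hcon
      exact hs (N.nondeg0 _ hcon)
    obtain ⟨xs, hxs⟩ : ∃ xs, N.B0 (S.sq z) xs = 1 :=
      ⟨(N.B0 (S.sq z) y)⁻¹ • y, by simp [hy]⟩
    have h : IsHyperbolicPair N.B0 (S.sq z) xs := ⟨N.symm0, hC z, hxs⟩
    refine ⟨S.sq z, xs, orthPair N.B0 (S.sq z) xs, evenReduction h hx0 hx1 hC,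
      evenReductionNIS h hx0 hx1 hC, evenReductionDer h hx0 hx1 hC,
      fun f => N.B0 xs (S.sq f), devDataEven_evenReduction h hx0 hx1 hC, hs,
      h.notMem_span, h.isCompl.inf_eq_bot, h.isCompl.sup_eq_top, h.finrank_orthPair, hx0, hx1,
      fun u v => ?_, fun _ _ => rfl, fun _ => rfl, fun _ => rfl, fun f g => ?_,
      fun f => h.eq_add_proj (hC f), fun _ _ => rfl, fun _ _ => rfl, hC z, hxs,
      fun u => u.2.1, fun u => u.2.2⟩
    · change S.br0 u v = N.B0 (S.br0 xs u) v • S.sq z + (h.proj (S.br0 u v) : g0)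
      rw [N.inv0]
      exact h.eq_add_proj (B0_central_br0 hx0 _ _)
    · change S.br11 f g = N.B1 f (S.br1 xs g) • S.sq z + (h.proj (S.br11 f g) : g0)
      rw [← N.inv2, N.symm0]
      exact h.eq_add_proj (B0_central_br11 hx1 _ _)

end Char2DoubleExt
end

section
/- Let (a,B_a) be a NIS-Lie superalgebra over a field K of characteristic 2 with B_a even. Let D and D̃ be even derivations of a, and let α and α̃ be quadratic forms on a_1 whose polar forms satisfy B_α(u,v) = B_a(D(u),v) and B_{α̃}(u,v) = B_a(D̃(u),v) for all u,v ∈ a_1. Let π_0 be an even linear bijection of a preserving B_a (i.e. B_a(π_0(u),π_0(v)) = B_a(u,v) for all u,v), let λ ∈ K, and let t ∈ a_0. If α̃(π_0(u)) + λα(u) + B_a(t, s_a(u)) = 0 for all u ∈ a_1, then π_0^{-1}(D̃(π_0(u))) + λD(u) + [t,u] = 0 for all u ∈ a_1. -/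
namespace Char2DoubleExt

/-- Lemma 3.11 of the paper: let `(a, B_a)` be a NIS-Lie
superalgebra in characteristic 2 with `B_a` even, `D`, `D̃` even derivations
with quadratic forms `α`, `α̃` on `a_1` whose polar forms are `B_a(D·,·)` and
`B_a(D̃·,·)`, let `π₀` be an even linear bijection of `a` preserving `B_a`,
`λ ∈ K` and `t ∈ a_0`. If `α̃(π₀(u)) + λα(u) + B_a(t, s_a(u)) = 0` for all odd
`u`, then `π₀⁻¹(D̃(π₀(u))) + λD(u) + [t,u] = 0` for all odd `u`. -/
theorem stmt5 (K : Type) [Field K] [CharP K 2] (a0 a1 : Type)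
    [AddCommGroup a0] [Module K a0] [AddCommGroup a1] [Module K a1]
    [FiniteDimensional K a0] [FiniteDimensional K a1]
    (S : SuperAlg K a0 a1) (N : EvenNIS K a0 a1 S)
    (D Dt : EvenDer K a0 a1 S) (al alt : a1 → K)
    (hal : ∀ (c : K) (f : a1), al (c • f) = c * c * al f)
    (halt : ∀ (c : K) (f : a1), alt (c • f) = c * c * alt f)
    (hpol : ∀ f g : a1, al (f + g) - al f - al g = N.B1 (D.D1 f) g)
    (hpolt : ∀ f g : a1, alt (f + g) - alt f - alt g = N.B1 (Dt.D1 f) g)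
    (e0 : a0 ≃ₗ[K] a0) (e1 : a1 ≃ₗ[K] a1)
    (he0 : ∀ x y : a0, N.B0 (e0 x) (e0 y) = N.B0 x y)
    (he1 : ∀ f g : a1, N.B1 (e1 f) (e1 g) = N.B1 f g)
    (lam : K) (t : a0)
    (hyp : ∀ u : a1, alt (e1 u) + lam * al u + N.B0 t (S.sq u) = 0) :
    ∀ u : a1, e1.symm (Dt.D1 (e1 u)) + lam • D.D1 u + S.br1 t u = 0 := by
  intro u
  refine N.nondeg1 _ fun v => ?_
  have hinv : N.B1 (e1.symm (Dt.D1 (e1 u))) v = N.B1 (Dt.D1 (e1 u)) (e1 v) := by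
    rw [← he1, e1.apply_symm_apply]
  simp only [map_add, map_smul, LinearMap.add_apply, LinearMap.smul_apply, smul_eq_mul]
  rw [hinv, ← hpolt, ← hpol, N.inv1]
  have huv := hyp (u + v)
  rw [S.sq_add] at huv
  simp only [map_add] at huv
  linear_combination huv - hyp u - hyp v

end Char2DoubleExt
end

section
/- Let (a,B_a) be a NIS-Lie superalgebra over a field K of characteristic 2 with B_a even, and let (g,B_g) and (g̃,B_{g̃}) be D_ev-extensions of (a,B_a) by the pairs (D,α) and (D̃,α̃) respectively, with g = Kx ⊕ a ⊕ Kx* and g̃ = Kx̃ ⊕ a ⊕ Kx̃*. Suppose π_0 is an isometry of (a,B_a), λ ∈ K is nonzero, and t ∈ a_0 satisfy: α̃ = λ·(α∘π_0^{-1}) + B_a(t, s_a(π_0^{-1}(·))) on a_1; π_0^{-1}∘D̃∘π_0 = λD + ad_t on a_0; and B_g(x*,x*) = λ^{-2}(B_a(t,t) + B_{g̃}(x̃*,x̃*)). Then for any ν ∈ K, the map π : g → g̃ defined by π(u) = π_0(u) + B_a(t,u)x̃ for u ∈ a, π(x) = λx̃, and π(x*) = λ^{-1}(x̃* + π_0(t))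 + νx̃, is an adapted isometry. -/
namespace Char2DoubleExt

/-- A vector space over a field of characteristic 2 has exponent 2. -/
theorem add_self_eq_zero_of_charTwo (K : Type) [Field K] [CharP K 2] {V : Type}
    [AddCommGroup V] [Module K V] (v : V) : v + v = 0 := by
  rw [← two_smul K v, CharTwo.two_eq_zero, zero_smul]

/-- The linear equivalence `r x + u + s x* ↦ λ r x̃ + p u + B(t,u) x̃ + s (λ⁻¹ (x̃* + p t) + ν x̃)`,
where `φ = B(t,·)`. -/
def devExtEquiv (K : Type) [Field K] {V : Type} [AddCommGroup V] [Module K V]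
    (p : V ≃ₗ[K] V) (φ : V →ₗ[K] K) (lam : K) (hlam : lam ≠ 0) (t : V) (ν : K) :
    (K × V × K) ≃ₗ[K] (K × V × K) where
  toFun v := (lam * v.1 + φ v.2.1 + v.2.2 * ν, p v.2.1 + (lam⁻¹ * v.2.2) • p t, lam⁻¹ * v.2.2)
  invFun w := (lam⁻¹ * (w.1 - φ (p.symm w.2.1 - w.2.2 • t) - lam * w.2.2 * ν),
    p.symm w.2.1 - w.2.2 • t, lam * w.2.2)
  map_add' v w := by
    refine Prod.ext ?_ (Prod.ext ?_ ?_)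
    · simp only [Prod.fst_add, Prod.snd_add, map_add]; ring
    · simp only [Prod.fst_add, Prod.snd_add, map_add]; module
    · simp only [Prod.snd_add]; ring
  map_smul' k v := by
    refine Prod.ext ?_ (Prod.ext ?_ ?_)
    · simp only [Prod.smul_fst, Prod.smul_snd, map_smul, smul_eq_mul, RingHom.id_apply]; ring
    · simp only [Prod.smul_fst, Prod.smul_snd, map_smul, smul_eq_mul, RingHom.id_apply]; module
    · simp only [Prod.smul_snd, smul_eq_mul, RingHom.id_apply]; ring
  left_inv v := by
    refine Prod.ext ?_ (Prod.ext ?_ ?_)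
    · simp only [map_add, map_smul, LinearEquiv.symm_apply_apply, add_sub_cancel_right]
      field_simp
      ring
    · simp only [map_add, map_smul, LinearEquiv.symm_apply_apply, add_sub_cancel_right]
    · exact mul_inv_cancel_left₀ hlam _
  right_inv w := by
    refine Prod.ext ?_ (Prod.ext ?_ ?_)
    · simp only [mul_inv_cancel_left₀ hlam]
      ring
    · simp only [map_sub, map_smul, LinearEquiv.apply_symm_apply, inv_mul_cancel_left₀ hlam,
        sub_add_cancel]
    · exact inv_mul_cancel_left₀ hlam _

/-- The relation between the quadratic forms forces the relation between the derivations on the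
odd part. -/
theorem odd_derivation_conj {K : Type} [Field K] {a0 a1 : Type}
    [AddCommGroup a0] [Module K a0] [AddCommGroup a1] [Module K a1]
    {S : SuperAlg K a0 a1} {N : EvenNIS K a0 a1 S}
    {D Dt : EvenDer K a0 a1 S} {al alt : a1 → K}
    (hdata : DevDataEven K a0 a1 S N D al)
    (hdatat : DevDataEven K a0 a1 S N Dt alt)
    (p0 : EvenIsometry K a0 a1 a0 a1 S N S N) (lam : K) (t : a0)
    (hal : ∀ f : a1, alt (p0.e1 f) = lam * al f + N.B0 t (S.sq f)) (f : a1) :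
    Dt.D1 (p0.e1 f) = p0.e1 (lam • D.D1 f + S.br1 t f) := by
  obtain ⟨-, -, -, -, hpol⟩ := hdata
  obtain ⟨-, -, -, -, hpolt⟩ := hdatat
  rw [← sub_eq_zero]
  refine N.nondeg1 _ fun g => ?_
  obtain ⟨g, rfl⟩ := p0.e1.surjective g
  have ht : N.B1 g (S.br1 t f) = N.B0 t (S.br11 g f) := by
    rw [N.symm1, N.inv1, S.br11_comm]
  rw [N.symm1, map_sub, p0.map_B1, hpolt, ← map_add, hal, hal, hal, S.sq_add]
  simp only [map_add, map_smul, smul_eq_mul, ht, hpol]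
  ring

/-- Theorem 3.12 of the paper: let `(g, B_g)` and `(g̃, B_g̃)`
be `D_ev`-extensions (even form) of the same NIS-Lie superalgebra `(a, B_a)` by
the data `(D, α, c)` and `(D̃, α̃, c̃)` (where `c = B_g(x*,x*)`,
`c̃ = B_g̃(x̃*,x̃*)`). Given an isometry `π₀` of `(a, B_a)`, a nonzero `λ ∈ K`
and `t ∈ a_0` satisfying the stated compatibilities, the prescribed map `π` is
an adapted isometry `g → g̃`, for any `ν ∈ K`. -/
theorem stmt6 (K : Type) [Field K] [CharP K 2] (a0 a1 : Type)
    [AddCommGroup a0] [Module K a0] [AddCommGroup a1] [Module K a1]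
    [FiniteDimensional K a0] [FiniteDimensional K a1]
    (S : SuperAlg K a0 a1) (N : EvenNIS K a0 a1 S)
    (D Dt : EvenDer K a0 a1 S) (al alt : a1 → K) (c ct : K)
    (hdata : DevDataEven K a0 a1 S N D al)
    (hdatat : DevDataEven K a0 a1 S N Dt alt)
    (T : SuperAlg K (K × a0 × K) a1) (M : EvenNIS K (K × a0 × K) a1 T)
    (hT : DevExtEvenFormulas K a0 a1 S N D al c T M)
    (Tt : SuperAlg K (K × a0 × K) a1) (Mt : EvenNIS K (K × a0 × K) a1 Tt)
    (hTt : DevExtEvenFormulas K a0 a1 S N Dt alt ct Tt Mt)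
    (p0 : EvenIsometry K a0 a1 a0 a1 S N S N)
    (lam : K) (hlam : lam ≠ 0) (t : a0)
    (hal : ∀ f : a1, alt f = lam * al (p0.e1.symm f) + N.B0 t (S.sq (p0.e1.symm f)))
    (hDrel : ∀ u : a0, p0.e0.symm (Dt.D0 (p0.e0 u)) = lam • D.D0 u + S.br0 t u)
    (hc : c = lam⁻¹ * lam⁻¹ * (N.B0 t t + ct))
    (ν : K) :
    ∃ π : EvenIsometry K (K × a0 × K) a1 (K × a0 × K) a1 T M Tt Mt,
      (∀ (r s : K) (u : a0),
        π.e0 (r, u, s)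
          = (lam * r + N.B0 t u + s * ν,
             p0.e0 u + (lam⁻¹ * s) • p0.e0 t, lam⁻¹ * s)) ∧
      (∀ f : a1, π.e1 f = p0.e1 f) ∧
      -- adaptedness: `π(Kx ⊕ a) = Kx̃ ⊕ a`
      (∀ (r : K) (u : a0), ∃ (r' : K) (u' : a0), π.e0 (r, u, 0) = (r', u', 0)) := by
  have hD0 : ∀ u, Dt.D0 (p0.e0 u) = p0.e0 (lam • D.D0 u + S.br0 t u) := fun u => by
    rw [← hDrel, LinearEquiv.apply_symm_apply]
  have hal' : ∀ f, alt (p0.e1 f) = lam * al f + N.B0 t (S.sq f) := fun f => by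
    rw [hal, LinearEquiv.symm_apply_apply]
  have hD1 := odd_derivation_conj hdata hdatat p0 lam t hal'
  obtain ⟨hskew, -, hDself, -, -⟩ := hdata
  obtain ⟨hbr0, hbr1, hsq, hB0, hB1⟩ := hT
  obtain ⟨hbr0t, hbr1t, hsqt, hB0t, hB1t⟩ := hTt
  have hflip : ∀ u v, S.br0 u v = - S.br0 v u := fun u v => by
    have h := S.br0_self (u + v)
    simp only [map_add, LinearMap.add_apply, S.br0_self] at h
    exact eq_neg_of_add_eq_zero_right (by simpa using h)
  have htut : ∀ u, N.B0 (S.br0 t u) t = 0 := fun u => by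
    rw [N.inv0, hflip, map_neg, ← N.inv0, S.br0_self]; simp
  set e := devExtEquiv K p0.e0 (N.B0 t) lam hlam t ν
  have he : ∀ (r s : K) (u : a0), e (r, u, s) = (lam * r + N.B0 t u + s * ν,
      p0.e0 u + (lam⁻¹ * s) • p0.e0 t, lam⁻¹ * s) := fun _ _ _ => rfl
  have hesq : ∀ f, e (T.sq f) = Tt.sq (p0.e1 f) := fun f => by
    rw [hsq, hsqt, he, hal', p0.map_sq]; simp
  refine ⟨{ e0 := e, e1 := p0.e1, map_br0 := ?_, map_br1 := ?_, map_br11 := ?_, map_sq := hesq,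
            map_B0 := ?_, map_B1 := ?_ }, he, fun _ => rfl, fun r u => ⟨_, _, (he r 0 u).trans (by rw [mul_zero])⟩⟩
  · rintro ⟨r, u, s⟩ ⟨r', u', s'⟩
    rw [hbr0, he, he, he, hbr0t]
    have hcomb : ∀ (k : K) (u : a0), p0.e0 u + k • p0.e0 t = p0.e0 (u + k • t) := by simp
    refine Prod.ext ?_ (Prod.ext ?_ (by simp))
    · simp only [hcomb, hD0, p0.map_B0]
      simp only [map_add, map_smul, LinearMap.add_apply, LinearMap.smul_apply, smul_eq_mul,
        S.br0_self, map_zero, LinearMap.zero_apply, htut, hDself, N.inv0, N.symm0 (D.D0 u) t]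
      have h1 := hskew t u'
      have h2 := CharTwo.add_self_eq_zero (N.B0 t (D.D0 u'))
      have h3 : lam⁻¹ * lam = 1 := inv_mul_cancel₀ hlam
      linear_combination (-s) * h1 + s * h2
        - (s * N.B0 (D.D0 t) u' + s' * N.B0 t (D.D0 u)) * h3
    · simp only [hD0, ← p0.map_br0, ← map_smul, ← map_add]
      congr 1
      simp only [map_add, map_smul, LinearMap.add_apply, LinearMap.smul_apply, S.br0_self,
        hflip u t, smul_add, smul_smul, mul_zero, zero_smul]
      have h1 := add_self_eq_zero_of_charTwo K (S.br0 t u')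
      have h2 := add_self_eq_zero_of_charTwo K (D.D0 t)
      have h3 : lam⁻¹ * lam = 1 := inv_mul_cancel₀ hlam
      linear_combination (norm := module) (-s) • h3 • (D.D0 u') + (-s') • h3 • (D.D0 u)
        + (-(lam⁻¹ * s)) • h1 + (-(lam⁻¹ * lam⁻¹ * lam * s * s')) • h2
  · rintro ⟨r, u, s⟩ f
    rw [hbr1, he, hbr1t, hD1]
    simp only [map_add, map_smul, LinearMap.add_apply, LinearMap.smul_apply, p0.map_br1]
    have h1 := add_self_eq_zero_of_charTwo K (S.br1 (p0.e0 t) (p0.e1 f))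
    have h3 : lam⁻¹ * s * lam = s := by field_simp
    rw [smul_add, smul_smul, h3]
    linear_combination (norm := module) (-(lam⁻¹ * s)) • h1
  · intro f g
    have h := hesq (f + g)
    rw [T.sq_add, map_add, map_add, map_add, Tt.sq_add, hesq, hesq] at h
    exact add_left_cancel h
  · rintro ⟨r, u, s⟩ ⟨r', u', s'⟩
    rw [he, he, hB0t, hB0, hc]
    simp only [map_add, map_smul, LinearMap.add_apply, LinearMap.smul_apply, p0.map_B0,
      smul_eq_mul, N.symm0 u t]
    have h1 := CharTwo.add_self_eq_zero (N.B0 t u)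
    have h2 := CharTwo.add_self_eq_zero (N.B0 t u')
    have h3 := CharTwo.add_self_eq_zero ν
    have h4 : lam⁻¹ * lam = 1 := inv_mul_cancel₀ hlam
    linear_combination lam⁻¹ * s' * h1 + lam⁻¹ * s * h2 + lam⁻¹ * s * s' * h3
      + (r * s' + r' * s) * h4
  · intro f g
    rw [hB1t, hB1, p0.map_B1]

end Char2DoubleExt
end
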